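/- Let n ≥ 2 and set a := (n−2)/2 if 2 ≤ n ≤ 10, and a := √(n−1) + 1 if n ≥ 11. Let f ∈ C¹(ℝ) and let u be a W^{3,1}_loc(ℝⁿ) stable solution of div(∇u/√(1+|∇u|²)) = −f(u) in ℝⁿ. Set z := |∇u|². Then there exists a dimensional constant C > 0 such that for all 0 < ρ < R: (1/ρ^{2a}) ∫_{B_ρ} z²/(1+z)^{3/2} dx ≤ (C/R^{2a}) ∫_{B_{2R}∖B_R} z dx. -/

import Mathlib

open MeasureTheory Metric Real Filter Asymptotics Bornology
open scoped RealInnerProductSpace Topology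

noncomputable section

/-- Euclidean space `ℝⁿ`. -/
abbrev Euc (n : ℕ) := EuclideanSpace ℝ (Fin n)

/-- `φ` is an admissible test function on `Ω`: smooth with compact support contained in `Ω`
(i.e. `φ ∈ C_c^∞(Ω)`). -/
def IsTestFun {n : ℕ} (Ω : Set (Euc n)) (φ : Euc n → ℝ) : Prop :=
  ContDiff ℝ (⊤ : ℕ∞) φ ∧ HasCompactSupport φ ∧ tsupport φ ⊆ Ω

/-- `u` is a weak solution of the mean curvature equation
`div(∇u/√(1+|∇u|²)) = -f(u)` in `Ω`:  `u ∈ W^{1,1}_loc(Ω)`, `f(u) ∈ L¹_loc(Ω)` and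
`∫_Ω ∇u·∇φ/√(1+|∇u|²) = ∫_Ω f(u) φ` for every `φ ∈ C_c^∞(Ω)`. -/
def IsWeakSolution {n : ℕ} (Ω : Set (Euc n)) (f : ℝ → ℝ) (u : Euc n → ℝ) : Prop :=
  LocallyIntegrableOn u Ω ∧
  LocallyIntegrableOn (fun x => ‖gradient u x‖) Ω ∧
  LocallyIntegrableOn (fun x => f (u x)) Ω ∧
  ∀ φ : Euc n → ℝ, IsTestFun Ω φ →
    ∫ x in Ω, ⟪gradient u x, gradient φ x⟫ / Real.sqrt (1 + ‖gradient u x‖ ^ 2)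
      = ∫ x in Ω, f (u x) * φ x

/-- `u` is a stable solution of `div(∇u/√(1+|∇u|²)) = -f(u)` in `Ω`: it is a weak solution,
`f'(u) ∈ L¹_loc(Ω)` and the second variation of the energy at `u` is nonnegative:
`∫_Ω f'(u) ξ² ≤ ∫_Ω (|∇ξ|²/√(1+|∇u|²) - (∇u·∇ξ)²/(1+|∇u|²)^{3/2})` for all `ξ ∈ C_c^∞(Ω)`. -/
def IsStableSolution {n : ℕ} (Ω : Set (Euc n)) (f : ℝ → ℝ) (u : Euc n → ℝ) : Prop :=
  IsWeakSolution Ω f u ∧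
  LocallyIntegrableOn (fun x => deriv f (u x)) Ω ∧
  ∀ ξ : Euc n → ℝ, IsTestFun Ω ξ →
    ∫ x in Ω, deriv f (u x) * ξ x ^ 2 ≤
      ∫ x in Ω, (‖gradient ξ x‖ ^ 2 / Real.sqrt (1 + ‖gradient u x‖ ^ 2)
        - ⟪gradient u x, gradient ξ x⟫ ^ 2 / (1 + ‖gradient u x‖ ^ 2) ^ ((3:ℝ)/2))

/-- A vector field `g` belongs to the Morrey space `M^p(Ω)`: there is `K > 0` with
`∫_{B_ρ(x₀) ∩ Ω} |g| ≤ K ρ^{n(1-1/p)}` for all `x₀ ∈ Ω` and `0 < ρ ≤ diam Ω`. -/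
def MemMorrey {n : ℕ} (Ω : Set (Euc n)) (p : ℝ) (g : Euc n → Euc n) : Prop :=
  ∃ K > (0:ℝ), ∀ x₀ ∈ Ω, ∀ ρ : ℝ, 0 < ρ → ρ ≤ Metric.diam Ω →
    ∫ x in Metric.ball x₀ ρ ∩ Ω, ‖g x‖ ≤ K * ρ ^ ((n : ℝ) * (1 - 1 / p))

section helpers

variable {n : ℕ}

lemma ibp_aux {ψ v : Euc n → ℝ} (hψ : ContDiff ℝ 1 ψ) (hc : HasCompactSupport ψ)
    (hv : ContDiff ℝ 1 v) (e : Euc n) :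
    ∫ x, ψ x * fderiv ℝ v x e = - ∫ x, fderiv ℝ ψ x e * v x := by
  have h1 : Continuous fun x => fderiv ℝ ψ x e := by fun_prop
  have h2 : Continuous fun x => fderiv ℝ v x e := by fun_prop
  have hc1 : HasCompactSupport fun x => fderiv ℝ ψ x e := hc.fderiv_apply (𝕜 := ℝ) e
  apply integral_mul_fderiv_eq_neg_fderiv_mul_of_integrable
  · exact (h1.mul hv.continuous).integrable_of_hasCompactSupport hc1.mul_right
  · exact (hψ.continuous.mul h2).integrable_of_hasCompactSupport hc.mul_right
  · exact (hψ.continuous.mul hv.continuous).integrable_of_hasCompactSupport hc.mul_right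
  · exact fun x _ => hψ.differentiable (by norm_num) x
  · exact fun x _ => hv.differentiable (by norm_num) x

lemma grad_apply (φ : Euc n → ℝ) (x : Euc n) (i : Fin n) :
    gradient φ x i = fderiv ℝ φ x (EuclideanSpace.single i 1) := by
  rw [← inner_gradient_left, EuclideanSpace.inner_single_right]
  simp

lemma sum_basis (x : Euc n) : x = ∑ i, x i • EuclideanSpace.single i (1:ℝ) := by
  have := (EuclideanSpace.basisFun (Fin n) ℝ).sum_repr x
  simpa using this.symm

lemma contDiff_gradient {u : Euc n → ℝ} {k m : ℕ∞} (hu : ContDiff ℝ k u) (h : m + 1 ≤ k) :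
    ContDiff ℝ m (gradient u) := by
  unfold gradient
  apply (LinearIsometryEquiv.contDiff _).comp
  exact hu.fderiv_right (by exact_mod_cast h)

lemma euler_ibp {φ H : Euc n → ℝ} (hφ : ContDiff ℝ 1 φ) (hc : HasCompactSupport φ)
    (hH : ContDiff ℝ 1 H) :
    ∫ x, φ x * fderiv ℝ H x x = - ∫ x, H x * (n * φ x + fderiv ℝ φ x x) := by
  have hi : ∀ i : Fin n, ContDiff ℝ 1 (fun x : Euc n => x i) := fun i => by fun_prop
  have key : ∀ i : Fin n, ∫ x, (φ x * x i) * fderiv ℝ H x (EuclideanSpace.single i 1)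
      = - ∫ x, fderiv ℝ (fun x => φ x * x i) x (EuclideanSpace.single i 1) * H x := fun i =>
    ibp_aux (hφ.mul (hi i)) hc.mul_right hH _
  have hd : ∀ (i : Fin n) (x : Euc n),
      fderiv ℝ (fun x => φ x * x i) x (EuclideanSpace.single i 1)
        = φ x + x i * fderiv ℝ φ x (EuclideanSpace.single i 1) := by
    intro i x
    have h1 : HasFDerivAt (fun x : Euc n => x i) (EuclideanSpace.proj i : Euc n →L[ℝ] ℝ) x :=
      (EuclideanSpace.proj i : Euc n →L[ℝ] ℝ).hasFDerivAt
    have h2 := (hφ.differentiable (by norm_num) x).hasFDerivAt.fun_mul h1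
    rw [h2.fderiv]
    simp
  have hsum : ∀ (K : Euc n → ℝ) (x : Euc n), fderiv ℝ K x x
      = ∑ i, x i * fderiv ℝ K x (EuclideanSpace.single i 1) := by
    intro K x
    conv_lhs => rw [sum_basis x]
    rw [map_sum]
    conv_lhs => rw [← sum_basis x]
    simp
  have hL : ∀ x, φ x * fderiv ℝ H x x
      = ∑ i, (φ x * x i) * fderiv ℝ H x (EuclideanSpace.single i 1) := by
    intro x
    rw [hsum, Finset.mul_sum]
    exact Finset.sum_congr rfl fun i _ => by ring
  have hR : ∀ x, H x * (n * φ x + fderiv ℝ φ x x)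
      = ∑ i, fderiv ℝ (fun x => φ x * x i) x (EuclideanSpace.single i 1) * H x := by
    intro x
    simp only [hd]
    rw [← Finset.sum_mul, Finset.sum_add_distrib, ← hsum]
    simp
    ring
  simp only [hL, hR]
  rw [integral_finsetSum, integral_finsetSum, ← Finset.sum_neg_distrib]
  · exact Finset.sum_congr rfl fun i _ => key i
  · intro i _
    have h0 : ContDiff ℝ 1 (fun x : Euc n => φ x * x i) := hφ.mul (hi i)
    have hcc : HasCompactSupport (fun x : Euc n => φ x * x i) := hc.mul_right
    have h1 : Continuous fun x => fderiv ℝ (fun x : Euc n => φ x * x i) x (EuclideanSpace.single i 1) :=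
      (h0.continuous_fderiv (by norm_num)).clm_apply continuous_const
    exact (h1.mul hH.continuous).integrable_of_hasCompactSupport
      (hcc.fderiv_apply (𝕜 := ℝ) _).mul_right
  · intro i _
    have h1 : Continuous fun x => fderiv ℝ H x (EuclideanSpace.single i 1) :=
      (hH.continuous_fderiv (by norm_num)).clm_apply continuous_const
    exact ((hφ.continuous.mul (hi i).continuous).mul h1).integrable_of_hasCompactSupport
      (hc.mul_right.mul_right)

lemma mollify {ξ : Euc n → ℝ} (hξ : ContDiff ℝ 1 ξ) {M : ℝ} (hs : tsupport ξ ⊆ closedBall 0 M)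
    {ε : ℝ} (hε : 0 < ε) :
    ∃ ζ : Euc n → ℝ, IsTestFun Set.univ ζ ∧ tsupport ζ ⊆ closedBall 0 (M + 1) ∧
      ∀ x, |ζ x - ξ x| ≤ ε ∧ ‖gradient ζ x - gradient ξ x‖ ≤ ε := by
  have hc : HasCompactSupport ξ :=
    (isCompact_closedBall (0 : Euc n) M).of_isClosed_subset (isClosed_tsupport _) hs
  have hu1 : UniformContinuous ξ := hc.uniformContinuous_of_continuous hξ.continuous
  have hu2 : UniformContinuous (fderiv ℝ ξ) :=
    (hc.fderiv ℝ).uniformContinuous_of_continuous (hξ.continuous_fderiv (by norm_num))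
  obtain ⟨δ1, hδ1, h1⟩ := Metric.uniformContinuous_iff.1 hu1 ε hε
  obtain ⟨δ2, hδ2, h2⟩ := Metric.uniformContinuous_iff.1 hu2 ε hε
  let r := min 1 (min δ1 δ2)
  have hr : 0 < r := lt_min one_pos (lt_min hδ1 hδ2)
  let b : ContDiffBump (0 : Euc n) := ⟨r / 2, r, by positivity, by linarith⟩
  let ζ : Euc n → ℝ := convolution (b.normed volume) ξ (ContinuousLinearMap.lsmul ℝ ℝ) volume
  have hts : tsupport ζ ⊆ closedBall 0 (M + 1) := by
    apply closure_minimal _ isClosed_closedBall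
    refine (support_convolution_subset _).trans ?_
    rw [b.support_normed_eq]
    rintro _ ⟨y, hy, z, hz, rfl⟩
    have hz' := hs (subset_tsupport _ hz)
    have hr1 : r ≤ 1 := min_le_left _ _
    simp only [mem_ball, mem_closedBall, dist_zero_right] at hy hz' ⊢
    have : ‖y‖ < r := hy
    exact (norm_add_le _ _).trans (by linarith)
  refine ⟨ζ, ⟨?_, ?_, Set.subset_univ _⟩, hts, fun x => ⟨?_, ?_⟩⟩
  · exact b.hasCompactSupport_normed.contDiff_convolution_left _ b.contDiff_normed
      hξ.continuous.locallyIntegrable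
  · exact (isCompact_closedBall (0 : Euc n) (M+1)).of_isClosed_subset (isClosed_tsupport _) hts
  · rw [← Real.dist_eq]
    apply b.dist_normed_convolution_le hξ.continuous.aestronglyMeasurable
    intro y hy
    exact (h1 (lt_of_lt_of_le hy ((min_le_right _ _).trans (min_le_left _ _)))).le
  · have hd := hc.hasFDerivAt_convolution_right (ContinuousLinearMap.lsmul ℝ ℝ)
      ((b.continuous_normed (μ := volume)).locallyIntegrable (μ := volume)) hξ x
    unfold gradient
    rw [← map_sub, LinearIsometryEquiv.norm_map, ← dist_eq_norm]
    have h3 : fderiv ℝ ζ x = convolution (b.normed volume) (fderiv ℝ ξ)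
        (ContinuousLinearMap.lsmul ℝ ℝ) volume x := by
      rw [hd.fderiv]
      unfold convolution
      congr 1
    rw [h3]
    apply b.dist_normed_convolution_le (hξ.continuous_fderiv (by norm_num)).aestronglyMeasurable
    intro y hy
    exact (h2 (lt_of_lt_of_le hy ((min_le_right _ _).trans (min_le_right _ _)))).le

lemma stab_C1 {f : ℝ → ℝ} {u : Euc n → ℝ} (hf : ContDiff ℝ 1 f) (hu : ContDiff ℝ 3 u)
    (hst : IsStableSolution (Set.univ : Set (Euc n)) f u)
    {ξ : Euc n → ℝ} (hξ : ContDiff ℝ 1 ξ) (hc : HasCompactSupport ξ) :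
    ∫ x, deriv f (u x) * ξ x ^ 2 ≤
      ∫ x, (‖gradient ξ x‖ ^ 2 / Real.sqrt (1 + ‖gradient u x‖ ^ 2)
        - ⟪gradient u x, gradient ξ x⟫ ^ 2 / (Real.sqrt (1 + ‖gradient u x‖ ^ 2)) ^ 3) := by
  have hS3 : ∀ x, (1 + ‖gradient u x‖ ^ 2) ^ ((3:ℝ)/2)
      = (Real.sqrt (1 + ‖gradient u x‖ ^ 2)) ^ 3 := by
    intro x
    have h0 : (0:ℝ) ≤ 1 + ‖gradient u x‖ ^ 2 := by positivity
    generalize 1 + ‖gradient u x‖ ^ 2 = s at h0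
    rw [Real.sqrt_eq_rpow, ← Real.rpow_natCast, ← Real.rpow_mul h0]
    norm_num
  obtain ⟨M, hM⟩ := hc.isCompact.isBounded.subset_closedBall (0 : Euc n)
  have hG : Continuous (gradient u) :=
    (contDiff_gradient (k := 3) (m := 2) hu (by norm_num)).continuous
  have hgξ : Continuous (gradient ξ) :=
    (contDiff_gradient (k := 1) (m := 0) hξ (by norm_num)).continuous
  have hS : Continuous fun x => Real.sqrt (1 + ‖gradient u x‖ ^ 2) := by fun_prop
  have hS0 : ∀ x, Real.sqrt (1 + ‖gradient u x‖ ^ 2) ≠ 0 := fun x => by positivity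
  have hS1 : ∀ x, 1 ≤ Real.sqrt (1 + ‖gradient u x‖ ^ 2) := fun x => by
    rw [Real.one_le_sqrt]; nlinarith [sq_nonneg ‖gradient u x‖]
  have hf' : Continuous fun x => deriv f (u x) :=
    (hf.continuous_deriv (by norm_num)).comp hu.continuous
  choose ζ hζt hζs hζ using fun k : ℕ =>
    mollify hξ hM (ε := 1 / ((k:ℝ) + 1)) (by positivity)
  have hlim : Tendsto (fun k : ℕ => 1 / ((k:ℝ) + 1)) atTop (𝓝 0) :=
    tendsto_one_div_add_atTop_nhds_zero_nat
  have hε1 : ∀ k : ℕ, 1 / ((k:ℝ) + 1) ≤ 1 := fun k => by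
    rw [div_le_one (by positivity)]; linarith [(Nat.cast_nonneg k : (0:ℝ) ≤ k)]
  have hp1 : ∀ x, Tendsto (fun k => ζ k x) atTop (𝓝 (ξ x)) := fun x =>
    tendsto_iff_dist_tendsto_zero.2 (squeeze_zero (fun _ => dist_nonneg)
      (fun k => by rw [Real.dist_eq]; exact (hζ k x).1) hlim)
  have hp2 : ∀ x, Tendsto (fun k => gradient (ζ k) x) atTop (𝓝 (gradient ξ x)) := fun x =>
    tendsto_iff_dist_tendsto_zero.2 (squeeze_zero (fun _ => dist_nonneg)
      (fun k => by rw [dist_eq_norm]; exact (hζ k x).2) hlim)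
  have hz1 : ∀ k x, x ∉ closedBall (0 : Euc n) (M+1) → ζ k x = 0 := fun k x hx =>
    image_eq_zero_of_notMem_tsupport fun h => hx (hζs k h)
  have hz2 : ∀ k x, x ∉ closedBall (0 : Euc n) (M+1) → gradient (ζ k) x = 0 := fun k x hx => by
    unfold gradient
    rw [image_eq_zero_of_notMem_tsupport (f := fderiv ℝ (ζ k)) fun h =>
      hx (hζs k (tsupport_fderiv_subset ℝ h))]
    simp
  have hcζ : ∀ k, Continuous (gradient (ζ k)) := fun k =>
    (contDiff_gradient (k := ⊤) (m := 0) (hζt k).1 (by simp)).continuous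
  have hst' := fun k => hst.2.2 (ζ k) (hζt k)
  simp only [hS3, Measure.restrict_univ] at hst'
  have hK : IsCompact (closedBall (0 : Euc n) (M+1)) := isCompact_closedBall _ _
  refine le_of_tendsto_of_tendsto' (b := atTop) ?_ ?_ hst'
  · apply tendsto_integral_of_dominated_convergence
      ((closedBall (0 : Euc n) (M+1)).indicator fun x => |deriv f (u x)| * (|ξ x| + 1) ^ 2)
    · intro k
      exact (hf'.mul ((hζt k).1.continuous.pow 2)).aestronglyMeasurable
    · rw [integrable_indicator_iff hK.measurableSet]
      have hξc := hξ.continuous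
      exact ContinuousOn.integrableOn_compact hK (by fun_prop)
    · intro k
      refine Eventually.of_forall fun x => ?_
      by_cases hx : x ∈ closedBall (0 : Euc n) (M+1)
      · rw [Set.indicator_of_mem hx, norm_mul, norm_pow, Real.norm_eq_abs, Real.norm_eq_abs]
        have h1 : |ζ k x| ≤ |ξ x| + 1 := by
          have := (hζ k x).1.trans (hε1 k)
          have h2 := abs_sub_abs_le_abs_sub (ζ k x) (ξ x)
          linarith
        gcongr
      · rw [Set.indicator_of_notMem hx, hz1 k x hx]; simp
    · exact Eventually.of_forall fun x => ((hp1 x).pow 2).const_mul _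
  · apply tendsto_integral_of_dominated_convergence
      ((closedBall (0 : Euc n) (M+1)).indicator fun x =>
        (‖gradient ξ x‖ + 1) ^ 2 + (‖gradient u x‖ * (‖gradient ξ x‖ + 1)) ^ 2)
    · intro k
      have := hcζ k
      refine Continuous.aestronglyMeasurable ?_
      refine Continuous.sub (Continuous.div (by fun_prop) hS hS0)
        (Continuous.div (by fun_prop) (hS.pow 3) fun x => pow_ne_zero _ (hS0 x))
    · rw [integrable_indicator_iff hK.measurableSet]
      exact ContinuousOn.integrableOn_compact hK (by fun_prop)
    · intro k
      refine Eventually.of_forall fun x => ?_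
      by_cases hx : x ∈ closedBall (0 : Euc n) (M+1)
      · rw [Set.indicator_of_mem hx]
        have h1 : ‖gradient (ζ k) x‖ ≤ ‖gradient ξ x‖ + 1 := by
          have := (hζ k x).2.trans (hε1 k)
          have h2 := norm_sub_norm_le (gradient (ζ k) x) (gradient ξ x)
          linarith
        refine (norm_sub_le _ _).trans (add_le_add ?_ ?_)
        · rw [Real.norm_of_nonneg (by positivity)]
          refine (div_le_self (by positivity) (hS1 x)).trans ?_
          gcongr
        · rw [Real.norm_of_nonneg (by positivity)]
          refine (div_le_self (by positivity) (one_le_pow₀ (hS1 x))).trans ?_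
          rw [← sq_abs ⟪gradient u x, gradient (ζ k) x⟫]
          have := abs_real_inner_le_norm (gradient u x) (gradient (ζ k) x)
          have h3 : |⟪gradient u x, gradient (ζ k) x⟫| ≤ ‖gradient u x‖ * (‖gradient ξ x‖ + 1) :=
            this.trans (by gcongr)
          gcongr
      · rw [Set.indicator_of_notMem hx, hz2 k x hx]; simp
    · refine Eventually.of_forall fun x => ?_
      have h1 : Tendsto (fun k => ⟪gradient u x, gradient (ζ k) x⟫) atTop
        (𝓝 ⟪gradient u x, gradient ξ x⟫) := tendsto_const_nhds.inner (hp2 x)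
      exact (((hp2 x).norm.pow 2).div_const _).sub ((h1.pow 2).div_const _)

/-- the field `∇u/√(1+|∇u|²)` -/
def Vf (u : Euc n → ℝ) (x : Euc n) : Euc n :=
  (Real.sqrt (1 + ‖gradient u x‖ ^ 2))⁻¹ • gradient u x

lemma contDiff_S {u : Euc n → ℝ} (hu : ContDiff ℝ 3 u) :
    ContDiff ℝ 2 fun x => Real.sqrt (1 + ‖gradient u x‖ ^ 2) := by
  have hG : ContDiff ℝ 2 (gradient u) := contDiff_gradient (k := 3) (m := 2) hu (by norm_num)
  exact (contDiff_const.add (hG.norm_sq ℝ)).sqrt fun x => by positivity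

lemma contDiff_Vf {u : Euc n → ℝ} (hu : ContDiff ℝ 3 u) : ContDiff ℝ 2 (Vf u) := by
  have hG : ContDiff ℝ 2 (gradient u) := contDiff_gradient (k := 3) (m := 2) hu (by norm_num)
  exact ((contDiff_S hu).inv fun x => by positivity).smul hG

lemma integral_div_aux {V : Euc n → Euc n} (hV : ContDiff ℝ 1 V) {ψ : Euc n → ℝ}
    (hψ : ContDiff ℝ 1 ψ) (hc : HasCompactSupport ψ) :
    ∫ x, ψ x * (∑ i, fderiv ℝ (fun y => V y i) x (EuclideanSpace.single i 1))
      = - ∫ x, ⟪V x, gradient ψ x⟫ := by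
  have hVi : ∀ i : Fin n, ContDiff ℝ 1 (fun y => V y i) := fun i => by fun_prop
  have h1 : ∀ x, ⟪V x, gradient ψ x⟫
      = ∑ i, fderiv ℝ ψ x (EuclideanSpace.single i 1) * V x i := by
    intro x
    simp only [← grad_apply, PiLp.inner_apply]
    simp
  simp only [h1, Finset.mul_sum]
  rw [integral_finsetSum, integral_finsetSum, ← Finset.sum_neg_distrib]
  · exact Finset.sum_congr rfl fun i _ => ibp_aux hψ hc (hVi i) _
  · intro i _
    have h1 : Continuous fun x => fderiv ℝ ψ x (EuclideanSpace.single i 1) :=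
      (hψ.continuous_fderiv (by norm_num)).clm_apply continuous_const
    exact (h1.mul (hVi i).continuous).integrable_of_hasCompactSupport
      (hc.fderiv_apply (𝕜 := ℝ) _).mul_right
  · intro i _
    have h1 : Continuous fun x => fderiv ℝ (fun y => V y i) x (EuclideanSpace.single i 1) :=
      ((hVi i).continuous_fderiv (by norm_num)).clm_apply continuous_const
    exact (hψ.continuous.mul h1).integrable_of_hasCompactSupport hc.mul_right

lemma div_Vf {f : ℝ → ℝ} {u : Euc n → ℝ} (hf : ContDiff ℝ 1 f) (hu : ContDiff ℝ 3 u)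
    (hst : IsStableSolution (Set.univ : Set (Euc n)) f u) (x : Euc n) :
    ∑ i, fderiv ℝ (fun y => Vf u y i) x (EuclideanSpace.single i 1) = - f (u x) := by
  have hV : ContDiff ℝ 1 (Vf u) := (contDiff_Vf hu).of_le (by norm_num)
  have hVi : ∀ i : Fin n, ContDiff ℝ 1 (fun y => Vf u y i) := fun i =>
    (EuclideanSpace.proj i : Euc n →L[ℝ] ℝ).contDiff.comp hV
  have hc1 : Continuous fun x => ∑ i, fderiv ℝ (fun y => Vf u y i) x (EuclideanSpace.single i 1) :=
    continuous_finsetSum _ fun i _ =>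
      ((hVi i).continuous_fderiv (by norm_num)).clm_apply continuous_const
  have hc2 : Continuous fun x => - f (u x) := (hf.continuous.comp hu.continuous).neg
  have hae := ae_eq_of_integral_contDiff_smul_eq (μ := volume) hc1.locallyIntegrable
    hc2.locallyIntegrable (fun g hg hgc => ?_)
  · exact congrFun ((hc1.ae_eq_iff_eq volume hc2).1 hae) x
  · have := hst.1.2.2.2 g ⟨hg, hgc, Set.subset_univ _⟩
    simp only [Measure.restrict_univ] at this
    simp only [smul_eq_mul]
    rw [integral_div_aux hV (hg.of_le (by exact_mod_cast le_top)) hgc]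
    simp only [mul_neg, integral_neg, neg_inj]
    rw [show (∫ x, g x * f (u x)) = ∫ x, f (u x) * g x by simp only [mul_comm], ← this]
    congr 1
    funext y
    rw [Vf, real_inner_smul_left]
    field_simp

lemma lemA {f : ℝ → ℝ} {u : Euc n → ℝ} (hf : ContDiff ℝ 1 f) (hu : ContDiff ℝ 3 u)
    (hst : IsStableSolution (Set.univ : Set (Euc n)) f u) {ψ : Euc n → ℝ}
    (hψ : ContDiff ℝ 1 ψ) (hc : HasCompactSupport ψ) :
    ∫ x, deriv f (u x) * ⟪gradient u x, x⟫ * ψ x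
      = ∫ x, ⟪fderiv ℝ (Vf u) x x - Vf u x, gradient ψ x⟫ := by
  have hV : ContDiff ℝ 2 (Vf u) := contDiff_Vf hu
  have hW : ContDiff ℝ 1 (fun x => fderiv ℝ (Vf u) x x - Vf u x) :=
    ((hV.fderiv_right (m := 1) (by norm_num)).clm_apply contDiff_id).sub (hV.of_le (by norm_num))
  have h := integral_div_aux hW hψ hc
  rw [eq_neg_iff_add_eq_zero, add_comm, ← eq_neg_iff_add_eq_zero] at h
  rw [h, ← integral_neg]
  congr 1
  funext x
  have hVi : ∀ i : Fin n, ContDiff ℝ 2 (fun y => Vf u y i) := fun i =>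
    (EuclideanSpace.proj i : Euc n →L[ℝ] ℝ).contDiff.comp hV
  have hcoord : ∀ (i : Fin n) (y v : Euc n),
      fderiv ℝ (Vf u) y v i = fderiv ℝ (fun y => Vf u y i) y v := by
    intro i y v
    have h1 := (EuclideanSpace.proj i : Euc n →L[ℝ] ℝ).hasFDerivAt.comp y
      (hV.differentiable (by norm_num) y).hasFDerivAt
    have h2 : fderiv ℝ (fun y => Vf u y i) y = _ := h1.fderiv
    rw [h2]; rfl
  have key : ∀ i : Fin n, fderiv ℝ (fun y => (fderiv ℝ (Vf u) y y - Vf u y) i) x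
      (EuclideanSpace.single i 1)
      = fderiv ℝ (fun y => fderiv ℝ (fun y => Vf u y i) y (EuclideanSpace.single i 1)) x x := by
    intro i
    set v : Euc n → ℝ := fun y => Vf u y i with hv
    have h0 : (fun y => (fderiv ℝ (Vf u) y y - Vf u y) i) = fun y => fderiv ℝ v y y - v y := by
      funext y
      simp [hcoord, hv]
    rw [h0]
    have hd : HasFDerivAt (fderiv ℝ v) (fderiv ℝ (fderiv ℝ v) x) x :=
      (((hVi i).fderiv_right (m := 1) (by norm_num)).differentiable (by norm_num) x).hasFDerivAt
    have h1 := (hd.clm_apply (hasFDerivAt_id x)).sub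
      ((hVi i).differentiable (by norm_num) x).hasFDerivAt
    have h2 := hd.clm_apply (hasFDerivAt_const (EuclideanSpace.single i (1:ℝ)) x)
    rw [h2.fderiv]
    have h1' : fderiv ℝ (fun y => fderiv ℝ v y y - v y) x = _ := h1.fderiv
    rw [h1']
    have hsym : IsSymmSndFDerivAt ℝ v x := (hVi i).contDiffAt.isSymmSndFDerivAt (by simp)
    have := hsym (EuclideanSpace.single i 1) x
    rw [← hv] at *
    simp [this]
  have hdivE : ∑ i, fderiv ℝ (fun y => fderiv ℝ (fun y => Vf u y i) y (EuclideanSpace.single i 1)) x x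
      = - (deriv f (u x) * ⟪gradient u x, x⟫) := by
    have hds : HasFDerivAt (fun y => ∑ i, fderiv ℝ (fun y => Vf u y i) y (EuclideanSpace.single i 1))
        (∑ i, fderiv ℝ (fun y => fderiv ℝ (fun y => Vf u y i) y (EuclideanSpace.single i 1)) x) x := by
      apply HasFDerivAt.fun_sum
      intro i _
      have : ContDiff ℝ 1 (fun y => fderiv ℝ (fun y => Vf u y i) y (EuclideanSpace.single i 1)) :=
        ((hVi i).fderiv_right (m := 1) (by norm_num)).clm_apply contDiff_const
      exact (this.differentiable (by norm_num) x).hasFDerivAt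
    have heq : (fun y => ∑ i, fderiv ℝ (fun y => Vf u y i) y (EuclideanSpace.single i 1))
        = fun y => - f (u y) := funext fun y => div_Vf hf hu hst y
    rw [heq] at hds
    have hfu : HasFDerivAt (fun y => - f (u y)) (-(deriv f (u x) • fderiv ℝ u x)) x :=
      ((hf.differentiable (by norm_num) (u x)).hasDerivAt.comp_hasFDerivAt x
        (hu.differentiable (by norm_num) x).hasFDerivAt).neg
    have := congrArg (fun L => L x) (hds.unique hfu)
    simp only [sum_apply] at this
    rw [this, inner_gradient_left]
    simp
  rw [Finset.sum_congr rfl fun i _ => key i, hdivE]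
  ring

lemma hasGradientAt_of {F : Euc n → ℝ} {L : Euc n →L[ℝ] ℝ} {g x : Euc n}
    (h : HasFDerivAt F L x) (hL : ∀ v, L v = ⟪g, v⟫) : HasGradientAt F g x := by
  rw [hasGradientAt_iff_hasFDerivAt]
  have : InnerProductSpace.toDual ℝ (Euc n) g = L := by
    ext v
    rw [hL, InnerProductSpace.toDual_apply_apply]
  rw [this]
  exact h

/-- The integrand of the main energy inequality. -/
def mainI (u : Euc n → ℝ) (η q : Euc n → ℝ) (x : Euc n) : ℝ :=
  (q x ^ 2 * ⟪gradient u x, x⟫ ^ 2 * (‖x‖ ^ 2 * (1 + ‖gradient u x‖ ^ 2) - ⟪gradient u x, x⟫ ^ 2)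
    + 2 * (2 + ‖gradient u x‖ ^ 2) * ⟪gradient u x, x⟫ ^ 2 * η x * q x
    + η x ^ 2 * ‖gradient u x‖ ^ 2 * (2 + ‖gradient u x‖ ^ 2)
    - ‖gradient u x‖ ^ 2 * (1 + ‖gradient u x‖ ^ 2) * (n * η x ^ 2 + 2 * η x * q x * ‖x‖ ^ 2))
    / Real.sqrt (1 + ‖gradient u x‖ ^ 2) ^ 3

lemma main_energy {f : ℝ → ℝ} {u : Euc n → ℝ} (hf : ContDiff ℝ 1 f) (hu : ContDiff ℝ 3 u)
    (hst : IsStableSolution (Set.univ : Set (Euc n)) f u) {η q : Euc n → ℝ}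
    (hη : ContDiff ℝ 2 η) (hq : Continuous q) (hg : ∀ x, gradient η x = q x • x) {M : ℝ}
    (hM : ∀ x, M ≤ ‖x‖ → η x = 0 ∧ q x = 0) :
    Integrable (mainI u η q) ∧ 0 ≤ ∫ x, mainI u η q x := by
  have hG : ContDiff ℝ 2 (gradient u) := contDiff_gradient (k := 3) (m := 2) hu (by norm_num)
  have hGc := hG.continuous
  have hηc := hη.continuous
  have hw : ContDiff ℝ 2 fun x => ⟪gradient u x, x⟫ := hG.inner ℝ contDiff_id
  have hS := contDiff_S hu
  have hSc := hS.continuous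
  have hSpos : ∀ x, 0 < Real.sqrt (1 + ‖gradient u x‖ ^ 2) := fun x => by positivity
  have hSsq : ∀ x, Real.sqrt (1 + ‖gradient u x‖ ^ 2) ^ 2 = 1 + ‖gradient u x‖ ^ 2 := fun x =>
    Real.sq_sqrt (by positivity)
  have hcs : ∀ F : Euc n → ℝ, (∀ x, M ≤ ‖x‖ → F x = 0) → HasCompactSupport F := by
    intro F hF
    refine HasCompactSupport.intro (isCompact_closedBall (0 : Euc n) M) fun x hx => hF x ?_
    simp only [mem_closedBall, dist_zero_right, not_le] at hx
    exact hx.le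
  set ξ : Euc n → ℝ := fun x => ⟪gradient u x, x⟫ * η x with hξdef
  set ψ : Euc n → ℝ := fun x => η x ^ 2 * ⟪gradient u x, x⟫ with hψdef
  set H : Euc n → ℝ := fun x => ‖gradient u x‖ ^ 2 / Real.sqrt (1 + ‖gradient u x‖ ^ 2) with hHdef
  have hξ : ContDiff ℝ 1 ξ := (hw.mul hη).of_le (by norm_num)
  have hψ : ContDiff ℝ 1 ψ := ((hη.pow 2).mul hw).of_le (by norm_num)
  have hH : ContDiff ℝ 1 H := ((hG.norm_sq ℝ).div hS fun x => (hSpos x).ne').of_le (by norm_num)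
  have hφ : ContDiff ℝ 1 fun x => η x ^ 2 := (hη.pow 2).of_le (by norm_num)
  have hξcs : HasCompactSupport ξ := hcs _ fun x hx => by simp [hξdef, (hM x hx).1]
  have hψcs : HasCompactSupport ψ := hcs _ fun x hx => by simp [hψdef, (hM x hx).1]
  have hφcs : HasCompactSupport fun x => η x ^ 2 := hcs _ fun x hx => by simp [(hM x hx).1]
  -- pointwise derivatives
  have hGd : ∀ x, HasFDerivAt (gradient u) (fderiv ℝ (gradient u) x) x := fun x =>
    (hG.differentiable (by norm_num) x).hasFDerivAt
  have hηd : ∀ x v, fderiv ℝ η x v = q x * ⟪x, v⟫ := fun x v => by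
    rw [← inner_gradient_left, hg, real_inner_smul_left]
  have hηD : ∀ x, HasFDerivAt η (fderiv ℝ η x) x := fun x =>
    (hη.differentiable (by norm_num) x).hasFDerivAt
  have hsymm : ∀ x v v', ⟪fderiv ℝ (gradient u) x v, v'⟫ = ⟪fderiv ℝ (gradient u) x v', v⟫ := by
    intro x v v'
    have hd : HasFDerivAt (fderiv ℝ u) (fderiv ℝ (fderiv ℝ u) x) x :=
      ((hu.fderiv_right (m := 2) (by norm_num)).differentiable (by norm_num) x).hasFDerivAt
    have h1 : ∀ a b, ⟪fderiv ℝ (gradient u) x a, b⟫ = fderiv ℝ (fderiv ℝ u) x a b := by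
      intro a b
      have e1 := (hGd x).inner ℝ (hasFDerivAt_const b x)
      have e2 := hd.clm_apply (hasFDerivAt_const b x)
      have e3 : (fun y => ⟪gradient u y, b⟫) = fun y => fderiv ℝ u y b :=
        funext fun y => inner_gradient_left
      rw [e3] at e1
      have := congrArg (fun L => L a) (e1.unique e2)
      simpa using this
    rw [h1, h1]
    exact ((hu.of_le (m := 2) (by norm_num)).contDiffAt.isSymmSndFDerivAt (by simp)) v v'
  set P : Euc n → Euc n := fun x => fderiv ℝ (gradient u) x x with hPdef
  have hPc : Continuous P := (hG.continuous_fderiv (by norm_num)).clm_apply continuous_id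
  have hwd : ∀ x, HasGradientAt (fun x => ⟪gradient u x, x⟫) (P x + gradient u x) x := by
    intro x
    have e1 := (hGd x).inner ℝ (hasFDerivAt_id x)
    refine hasGradientAt_of e1 fun v => ?_
    simp [hPdef, inner_add_left, hsymm x v x, fderivInnerCLM_apply]
    ring
  have hηG : ∀ x, HasGradientAt η (q x • x) x := fun x => by
    rw [← hg]; exact (hη.differentiable (by norm_num) x).hasGradientAt
  have hξd : ∀ x, gradient ξ x = η x • (P x + gradient u x) + (⟪gradient u x, x⟫ * q x) • x := by
    intro x
    apply HasGradientAt.gradient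
    have e1 := (hwd x).hasFDerivAt.fun_mul (hηG x).hasFDerivAt
    refine hasGradientAt_of e1 fun v => ?_
    simp [inner_add_left, real_inner_smul_left]
    ring
  have hφG : ∀ x, HasGradientAt (fun x => η x ^ 2) ((2 * η x * q x) • x) x := by
    intro x
    have e1 := (hηG x).hasFDerivAt.pow 2
    refine hasGradientAt_of e1 fun v => ?_
    simp [real_inner_smul_left]
    ring
  have hψd : ∀ x, gradient ψ x
      = η x ^ 2 • (P x + gradient u x) + (2 * ⟪gradient u x, x⟫ * η x * q x) • x := by
    intro x
    apply HasGradientAt.gradient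
    have e1 := (hφG x).hasFDerivAt.fun_mul (hwd x).hasFDerivAt
    refine hasGradientAt_of e1 fun v => ?_
    simp [inner_add_left, real_inner_smul_left]
    ring
  have hzd : ∀ x, HasFDerivAt (fun x => ‖gradient u x‖ ^ 2)
      (2 • (innerSL ℝ (gradient u x)).comp (fderiv ℝ (gradient u) x)) x := fun x => (hGd x).norm_sq
  have hSd : ∀ x, HasFDerivAt (fun x => Real.sqrt (1 + ‖gradient u x‖ ^ 2))
      ((1 / (2 * Real.sqrt (1 + ‖gradient u x‖ ^ 2))) •
        (2 • (innerSL ℝ (gradient u x)).comp (fderiv ℝ (gradient u) x))) x := fun x =>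
    ((hzd x).const_add 1).sqrt (by positivity)
  have hSEuler : ∀ x, fderiv ℝ (fun x => Real.sqrt (1 + ‖gradient u x‖ ^ 2)) x x
      = ⟪gradient u x, P x⟫ / Real.sqrt (1 + ‖gradient u x‖ ^ 2) := by
    intro x
    rw [(hSd x).fderiv]
    have := (hSpos x).ne'
    simp [hPdef]
    field_simp
  have hVd : ∀ x, fderiv ℝ (Vf u) x x = (Real.sqrt (1 + ‖gradient u x‖ ^ 2))⁻¹ • P x
      - (⟪gradient u x, P x⟫ / Real.sqrt (1 + ‖gradient u x‖ ^ 2) ^ 3) • gradient u x := by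
    intro x
    have hne := (hSpos x).ne'
    have e0 := (hasDerivAt_inv hne).comp_hasFDerivAt x (hSd x)
    have e1 := e0.smul (hGd x)
    have e2 : fderiv ℝ (Vf u) x = _ := e1.fderiv
    rw [e2]
    have h3 := hSEuler x
    rw [(hSd x).fderiv] at h3
    simp only [add_apply, smul_apply,
      ContinuousLinearMap.smulRight_apply, h3]
    rw [sub_eq_add_neg, ← neg_smul]
    congr 2
    simp only [smul_eq_mul]
    field_simp
  have hHd : ∀ x, fderiv ℝ H x x = ⟪gradient u x, P x⟫ * (2 + ‖gradient u x‖ ^ 2)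
      / Real.sqrt (1 + ‖gradient u x‖ ^ 2) ^ 3 := by
    intro x
    have hne := (hSpos x).ne'
    have h3 := hSEuler x
    rw [(hSd x).fderiv] at h3
    have e0 := (hasDerivAt_inv hne).comp_hasFDerivAt x (hSd x)
    have e1 := (hzd x).fun_mul e0
    have e2 : fderiv ℝ H x = _ := e1.fderiv
    rw [e2]
    simp only [add_apply, smul_apply, h3]
    have hs := hSsq x
    simp only [hPdef, ContinuousLinearMap.comp_apply, innerSL_apply_apply, smul_eq_mul,
      Function.comp_apply, nsmul_eq_mul]
    generalize Real.sqrt (1 + ‖gradient u x‖ ^ 2) = S at *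
    have hz : ‖gradient u x‖ ^ 2 = S ^ 2 - 1 := by linarith
    rw [hz]
    field_simp
    push_cast
    ring
  -- integrals
  have hA := lemA hf hu hst hψ hψcs
  have hB := stab_C1 hf hu hst hξ hξcs
  have hE := euler_ibp hφ hφcs hH
  have hlhs : ∫ x, deriv f (u x) * ξ x ^ 2 = ∫ x, deriv f (u x) * ⟪gradient u x, x⟫ * ψ x := by
    congr 1; funext x; simp only [hξdef, hψdef]; ring
  rw [hlhs, hA] at hB
  have hVc : Continuous (Vf u) := (contDiff_Vf hu).continuous
  have hVdc : Continuous fun x => fderiv ℝ (Vf u) x x :=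
    ((contDiff_Vf hu).continuous_fderiv (by norm_num)).clm_apply continuous_id
  have hξ0 : ∀ x, M ≤ ‖x‖ → gradient ξ x = 0 := fun x hx => by
    rw [hξd, (hM x hx).1, (hM x hx).2]; simp
  have hψ0 : ∀ x, M ≤ ‖x‖ → gradient ψ x = 0 := fun x hx => by
    rw [hψd, (hM x hx).1, (hM x hx).2]; simp
  have hgξc : Continuous (gradient ξ) :=
    (contDiff_gradient (k := 1) (m := 0) hξ (by norm_num)).continuous
  have hgψc : Continuous (gradient ψ) :=
    (contDiff_gradient (k := 1) (m := 0) hψ (by norm_num)).continuous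
  have hi1 : Integrable fun x => ⟪fderiv ℝ (Vf u) x x - Vf u x, gradient ψ x⟫ :=
    ((hVdc.sub hVc).inner hgψc).integrable_of_hasCompactSupport
      (hcs _ fun x hx => by rw [hψ0 x hx, inner_zero_right])
  have hi2 : Integrable fun x => (‖gradient ξ x‖ ^ 2 / Real.sqrt (1 + ‖gradient u x‖ ^ 2)
        - ⟪gradient u x, gradient ξ x⟫ ^ 2 / (Real.sqrt (1 + ‖gradient u x‖ ^ 2)) ^ 3) :=
    Continuous.integrable_of_hasCompactSupport
      (Continuous.sub (Continuous.div (by fun_prop) hSc fun x => (hSpos x).ne')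
        (Continuous.div (by fun_prop) (hSc.pow 3) fun x => pow_ne_zero _ (hSpos x).ne'))
      (hcs _ fun x hx => by rw [hξ0 x hx]; simp)
  have hi3 : Integrable (mainI u η q) := by
    refine Continuous.integrable_of_hasCompactSupport ?_
      (hcs _ fun x hx => by simp [mainI, (hM x hx).1, (hM x hx).2])
    unfold mainI
    exact Continuous.div (by fun_prop) (hSc.pow 3) fun x => pow_ne_zero _ (hSpos x).ne'
  have hi4 : Integrable fun x => η x ^ 2 * fderiv ℝ H x x :=
    Continuous.integrable_of_hasCompactSupport
      ((hηc.pow 2).mul ((hH.continuous_fderiv (by norm_num)).clm_apply continuous_id))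
      (hcs _ fun x hx => by simp [(hM x hx).1])
  have hφd : ∀ x, fderiv ℝ (fun x => η x ^ 2) x x = 2 * η x * q x * ‖x‖ ^ 2 := fun x => by
    rw [(hφG x).fderiv_apply, real_inner_smul_left, real_inner_self_eq_norm_sq]
  have hi5 : Integrable fun x => H x * (n * η x ^ 2 + fderiv ℝ (fun x => η x ^ 2) x x) := by
    simp only [hφd]
    have := hH.continuous
    exact Continuous.integrable_of_hasCompactSupport (by fun_prop)
      (hcs _ fun x hx => by simp [(hM x hx).1])
  refine ⟨hi3, ?_⟩
  have hpt : ∀ x, (‖gradient ξ x‖ ^ 2 / Real.sqrt (1 + ‖gradient u x‖ ^ 2)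
        - ⟪gradient u x, gradient ξ x⟫ ^ 2 / (Real.sqrt (1 + ‖gradient u x‖ ^ 2)) ^ 3)
        - ⟪fderiv ℝ (Vf u) x x - Vf u x, gradient ψ x⟫
      = mainI u η q x + (η x ^ 2 * fderiv ℝ H x x
        + H x * (n * η x ^ 2 + fderiv ℝ (fun x => η x ^ 2) x x)) := by
    intro x
    have hs := hSsq x
    have hne := (hSpos x).ne'
    simp only [hξd, hψd, hVd, hHd, hφd, mainI]
    rw [← real_inner_self_eq_norm_sq (_ + _)]
    simp only [Vf, hHdef]
    simp only [inner_add_left, inner_add_right, inner_sub_left, real_inner_smul_left,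
      real_inner_smul_right]
    simp only [real_inner_self_eq_norm_sq]
    rw [real_inner_comm (gradient u x) (P x), real_inner_comm (P x) x,
      real_inner_comm (gradient u x) x]
    generalize Real.sqrt (1 + ‖gradient u x‖ ^ 2) = S at *
    have hz : ‖gradient u x‖ ^ 2 = S ^ 2 - 1 := by linarith
    rw [hz]
    field_simp
    ring
  have h1 : 0 ≤ ∫ x, ((‖gradient ξ x‖ ^ 2 / Real.sqrt (1 + ‖gradient u x‖ ^ 2)
        - ⟪gradient u x, gradient ξ x⟫ ^ 2 / (Real.sqrt (1 + ‖gradient u x‖ ^ 2)) ^ 3)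
        - ⟪fderiv ℝ (Vf u) x x - Vf u x, gradient ψ x⟫) := by
    rw [integral_sub hi2 hi1]; linarith
  simp only [hpt] at h1
  have h2 : Integrable fun x => (η x ^ 2 * fderiv ℝ H x x
        + H x * (n * η x ^ 2 + fderiv ℝ (fun x => η x ^ 2) x x)) := hi4.add hi5
  rw [integral_add hi3 h2, integral_add hi4 hi5, hE] at h1
  linarith

/-- The exponent. -/
def expA (n : ℕ) : ℝ := if n ≤ 10 then ((n:ℝ) - 2)/2 else Real.sqrt ((n:ℝ) - 1) + 1

lemma expA_nonneg (hn : 2 ≤ n) : 0 ≤ expA n := by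
  unfold expA
  have : (2:ℝ) ≤ n := by exact_mod_cast hn
  split_ifs
  · linarith
  · positivity

lemma alg_Qa (hn : 2 ≤ n) {z s : ℝ} (hs : 0 ≤ s) (hsz : s ≤ z) :
    expA n ^ 2 * s * (1 + z - s) - z * ((n - 2) + (n - 1) * z) + 2 * expA n * z * (1 + z)
      - 2 * expA n * s * (2 + z) ≤ 0 := by
  have hn' : (2:ℝ) ≤ n := by exact_mod_cast hn
  have hz : 0 ≤ z := hs.trans hsz
  unfold expA
  split_ifs with h
  · have h10 : (n:ℝ) ≤ 10 := by exact_mod_cast h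
    set a : ℝ := ((n:ℝ) - 2)/2 with ha
    have hna : (n:ℝ) = 2 * a + 2 := by rw [ha]; ring
    have ha0 : 0 ≤ a := by linarith
    have ha4 : 0 ≤ 4 - a := by linarith
    rw [hna]
    have h1 : 0 ≤ a * (4 - a) * s := by positivity
    have h2 : 0 ≤ a * (4 - a) * s * z := by positivity
    nlinarith [sq_nonneg (z - a * s)]
  · have h11 : (11:ℝ) ≤ n := by exact_mod_cast (by omega : 11 ≤ n)
    set m : ℝ := Real.sqrt ((n:ℝ) - 1) with hm
    have hmsq : m ^ 2 = n - 1 := Real.sq_sqrt (by linarith)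
    have hm3 : 3 ≤ m := Real.le_sqrt_of_sq_le (by linarith)
    have hna : (n:ℝ) = m ^ 2 + 1 := by linarith
    rw [hna]
    have h0 : 0 ≤ m - 3 := by linarith
    have h00 : 0 ≤ z - s := by linarith
    have h1 : 0 ≤ (m + 1) * (m - 3) * (z - s) := by positivity
    have h2 : 0 ≤ (m + 1) * (m - 3) * (z - s) * z := by positivity
    nlinarith [sq_nonneg ((m + 1) * s - z)]

lemma alg_inner (hn : 2 ≤ n) {z s η q t w l : ℝ} (hs : 0 ≤ s) (hsz : s ≤ z)
    (hw : w ^ 2 = t * s) (hl : 0 ≤ l) (hl1 : l ≤ 1) (hq : q * t = - (expA n * l * η)) :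
    q ^ 2 * w ^ 2 * (t * (1 + z) - w ^ 2) + 2 * (2 + z) * w ^ 2 * η * q + η ^ 2 * z * (2 + z)
      - z * (1 + z) * (n * η ^ 2 + 2 * η * q * t) ≤ - ((1 - l) * η ^ 2 * z ^ 2) := by
  have hn' : (2:ℝ) ≤ n := by exact_mod_cast hn
  have hz : 0 ≤ z := hs.trans hsz
  have hQ := alg_Qa hn hs hsz
  have e1 : q ^ 2 * w ^ 2 * (t * (1 + z) - w ^ 2) + 2 * (2 + z) * w ^ 2 * η * q
      + η ^ 2 * z * (2 + z) - z * (1 + z) * (n * η ^ 2 + 2 * η * q * t)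
      = (q * t) ^ 2 * s * (1 + z - s) + 2 * (2 + z) * s * η * (q * t)
      + η ^ 2 * z * (2 + z) - z * (1 + z) * (n * η ^ 2 + 2 * η * (q * t)) := by
    rw [hw]; ring
  rw [e1, hq]
  generalize expA n = a at *
  have hl' : 0 ≤ 1 - l := by linarith
  have hzs : 0 ≤ 1 + z - s := by linarith
  have h1 : 0 ≤ η ^ 2 * (l * (1 - l) * a ^ 2 * s * (1 + z - s)) := by positivity
  have h2 : η ^ 2 * l * (a ^ 2 * s * (1 + z - s) - z * ((n - 2) + (n - 1) * z)
      + 2 * a * z * (1 + z) - 2 * a * s * (2 + z)) ≤ 0 :=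
    mul_nonpos_of_nonneg_of_nonpos (by positivity) hQ
  have hn2 : 0 ≤ (n:ℝ) - 2 := by linarith
  have h3 : 0 ≤ η ^ 2 * (1 - l) * (((n:ℝ) - 2) * z * (1 + z)) := by positivity
  nlinarith

lemma alg_outer (hn : 2 ≤ n) {z η q t w A M : ℝ} (hz : 0 ≤ z) (ht : 0 ≤ t) (hA : 0 ≤ A)
    (hw : w ^ 2 ≤ t * z) (hη : 0 ≤ η) (hηA : η ≤ A) (hq : |q| * t ≤ M * A) :
    q ^ 2 * w ^ 2 * (t * (1 + z) - w ^ 2) + 2 * (2 + z) * w ^ 2 * η * q + η ^ 2 * z * (2 + z)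
      - z * (1 + z) * (n * η ^ 2 + 2 * η * q * t) ≤ (M ^ 2 + 6 * M) * A ^ 2 * (z * (1 + z)) := by
  have hn' : (2:ℝ) ≤ n := by exact_mod_cast hn
  have hq0 : 0 ≤ |q| * t := by positivity
  have hMA : 0 ≤ M * A := hq0.trans hq
  have hηq : η * (|q| * t) ≤ A * (M * A) := mul_le_mul hηA hq hq0 hA
  have hqq : (|q| * t) ^ 2 ≤ (M * A) ^ 2 := by gcongr
  have h1 : q ^ 2 * w ^ 2 * (t * (1 + z) - w ^ 2) ≤ (M * A) ^ 2 * (z * (1 + z)) := by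
    calc q ^ 2 * w ^ 2 * (t * (1 + z) - w ^ 2) ≤ q ^ 2 * w ^ 2 * (t * (1 + z)) := by
          apply mul_le_mul_of_nonneg_left _ (by positivity)
          linarith [sq_nonneg w]
      _ ≤ q ^ 2 * (t * z) * (t * (1 + z)) := by gcongr
      _ = (|q| * t) ^ 2 * (z * (1 + z)) := by rw [mul_pow, sq_abs]; ring
      _ ≤ _ := by gcongr
  have h2 : 2 * (2 + z) * w ^ 2 * η * q ≤ 4 * (A * (M * A)) * (z * (1 + z)) := by
    calc 2 * (2 + z) * w ^ 2 * η * q ≤ 2 * (2 + z) * w ^ 2 * η * |q| := by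
          gcongr; exact le_abs_self q
      _ ≤ 2 * (2 + 2 * z) * (t * z) * η * |q| := by gcongr; linarith
      _ = 4 * (η * (|q| * t)) * (z * (1 + z)) := by ring
      _ ≤ _ := by gcongr
  have h3 : - (z * (1 + z) * (2 * η * q * t)) ≤ 2 * (A * (M * A)) * (z * (1 + z)) := by
    calc - (z * (1 + z) * (2 * η * q * t)) = z * (1 + z) * (2 * η * (-q) * t) := by ring
      _ ≤ z * (1 + z) * (2 * η * |q| * t) := by gcongr; exact neg_le_abs q
      _ = 2 * (η * (|q| * t)) * (z * (1 + z)) := by ring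
      _ ≤ _ := by gcongr
  have h4 : η ^ 2 * z * (2 + z) - z * (1 + z) * (n * η ^ 2) ≤ 0 := by
    have hn2 : 0 ≤ (n:ℝ) - 2 := by linarith
    have : 0 ≤ η ^ 2 * z * (z + ((n:ℝ) - 2) * (1 + z)) := by positivity
    nlinarith
  nlinarith

lemma exists_cutoff : ∃ (θ : ℝ → ℝ) (K : ℝ), ContDiff ℝ 2 θ ∧ (∀ s, 0 ≤ θ s ∧ θ s ≤ 1) ∧
    (∀ s ≤ 1, θ s = 1 ∧ deriv θ s = 0) ∧ (∀ s, 4 ≤ s → θ s = 0 ∧ deriv θ s = 0) ∧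
    0 ≤ K ∧ ∀ s, |deriv θ s| ≤ K := by
  let θ : ℝ → ℝ := fun s => Real.smoothTransition ((4 - s) / 3)
  have hθ : ContDiff ℝ 2 θ :=
    (Real.smoothTransition.contDiff (n := 2)).comp
      ((contDiff_const.sub contDiff_id).div_const _)
  have h01 : ∀ s, 0 ≤ θ s ∧ θ s ≤ 1 := fun s =>
    ⟨Real.smoothTransition.nonneg _, Real.smoothTransition.le_one _⟩
  have h1 : ∀ s ≤ 1, θ s = 1 ∧ deriv θ s = 0 := by
    intro s hs
    have h : θ s = 1 := Real.smoothTransition.one_of_one_le (by linarith)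
    refine ⟨h, IsLocalMax.deriv_eq_zero (Eventually.of_forall fun y => ?_)⟩
    simp only [h]; exact (h01 y).2
  have h4 : ∀ s, 4 ≤ s → θ s = 0 ∧ deriv θ s = 0 := by
    intro s hs
    have h : θ s = 0 := Real.smoothTransition.zero_of_nonpos (by linarith)
    refine ⟨h, IsLocalMin.deriv_eq_zero (Eventually.of_forall fun y => ?_)⟩
    simp only [h]; exact (h01 y).1
  obtain ⟨K, hK⟩ := (isCompact_Icc (a := (1:ℝ)) (b := 4)).exists_bound_of_continuousOn
    (hθ.continuous_deriv (by norm_num)).continuousOn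
  refine ⟨θ, |K|, hθ, h01, h1, h4, abs_nonneg _, fun s => ?_⟩
  rcases le_total s 1 with h | h
  · rw [(h1 s h).2]; simp
  rcases le_total 4 s with h' | h'
  · rw [(h4 s h').2]; simp
  · exact (hK s ⟨h, h'⟩).trans (le_abs_self K)

lemma main_final (hn : 2 ≤ n) : ∃ C > (0:ℝ), ∀ (f : ℝ → ℝ) (u : Euc n → ℝ),
      ContDiff ℝ 1 f → ContDiff ℝ 3 u → IsStableSolution (Set.univ : Set (Euc n)) f u →
      ∀ ρ R : ℝ, 0 < ρ → ρ < R →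
        1 / ρ ^ (2 * expA n) * ∫ x in ball (0 : Euc n) ρ,
              (‖gradient u x‖ ^ 2) ^ 2 / (1 + ‖gradient u x‖ ^ 2) ^ ((3:ℝ)/2)
          ≤ C / R ^ (2 * expA n) *
            ∫ x in ball (0 : Euc n) (2*R) \ ball (0 : Euc n) R, ‖gradient u x‖ ^ 2 := by
  obtain ⟨θ, K, hθ, h01, hθ1, hθ4, hK0, hK⟩ := exists_cutoff
  have ha0 := expA_nonneg hn
  set a := expA n with ha
  set M : ℝ := 4 * (a + 2 * K) with hMdef
  have hM0 : 0 ≤ M := by positivity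
  refine ⟨2 * 2 ^ a * (M ^ 2 + 6 * M + 1), by positivity, ?_⟩
  intro f u hf hu hst ρ R hρ hρR
  have hR : 0 < R := hρ.trans hρR
  have hG : Continuous (gradient u) :=
    (contDiff_gradient (k := 3) (m := 2) hu (by norm_num)).continuous
  have hpos : ∀ x : Euc n, 0 < ρ ^ 2 + ‖x‖ ^ 2 := fun x => by positivity
  let η : Euc n → ℝ := fun x => (ρ ^ 2 + ‖x‖ ^ 2) ^ (-a / 2) * θ (‖x‖ ^ 2 / R ^ 2)
  let q : Euc n → ℝ := fun x => -a * (ρ ^ 2 + ‖x‖ ^ 2) ^ (-a / 2 - 1) * θ (‖x‖ ^ 2 / R ^ 2)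
    + (ρ ^ 2 + ‖x‖ ^ 2) ^ (-a / 2) * (2 / R ^ 2 * deriv θ (‖x‖ ^ 2 / R ^ 2))
  have hn2 : ContDiff ℝ 2 fun x : Euc n => ‖x‖ ^ 2 := contDiff_id.norm_sq ℝ
  have hη : ContDiff ℝ 2 η :=
    ((contDiff_const.add hn2).rpow_const_of_ne fun x => (hpos x).ne').mul
      (hθ.comp (hn2.div_const _))
  have hq : Continuous q := by
    have h1 : ∀ p : ℝ, Continuous fun x : Euc n => (ρ ^ 2 + ‖x‖ ^ 2) ^ p := fun p =>
      Continuous.rpow_const (by fun_prop) fun x => Or.inl (hpos x).ne'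
    have h2 : Continuous fun x : Euc n => θ (‖x‖ ^ 2 / R ^ 2) :=
      hθ.continuous.comp (by fun_prop)
    have h3 : Continuous fun x : Euc n => deriv θ (‖x‖ ^ 2 / R ^ 2) :=
      (hθ.continuous_deriv (by norm_num)).comp (by fun_prop)
    exact ((continuous_const.mul (h1 _)).mul h2).add ((h1 _).mul (continuous_const.mul h3))
  have hg : ∀ x, gradient η x = q x • x := by
    intro x
    apply HasGradientAt.gradient
    have hd : HasFDerivAt (fun x : Euc n => ‖x‖ ^ 2)
        (2 • (innerSL ℝ x).comp (ContinuousLinearMap.id ℝ (Euc n))) x := (hasFDerivAt_id x).norm_sq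
    have e1 : HasDerivAt (fun t : ℝ => (ρ ^ 2 + t) ^ (-a / 2)) _ (‖x‖ ^ 2) :=
      ((hasDerivAt_id (‖x‖ ^ 2)).const_add (ρ ^ 2)).rpow_const (Or.inl (hpos x).ne')
    have e2 : HasDerivAt (fun t : ℝ => θ (t / R ^ 2)) _ (‖x‖ ^ 2) :=
      HasDerivAt.comp (‖x‖ ^ 2) (hθ.differentiable (by norm_num) (‖x‖ ^ 2 / R ^ 2)).hasDerivAt
        ((hasDerivAt_id (‖x‖ ^ 2)).div_const (R ^ 2))
    have e3 := (e1.fun_mul e2).comp_hasFDerivAt x hd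
    refine hasGradientAt_of e3 fun v => ?_
    simp [real_inner_smul_left, q]
    ring
  have hzero : ∀ x : Euc n, 2 * R ≤ ‖x‖ → η x = 0 ∧ q x = 0 := by
    intro x hx
    have h4 : 4 ≤ ‖x‖ ^ 2 / R ^ 2 := by
      rw [le_div_iff₀ (by positivity)]; nlinarith
    simp [η, q, hθ4 _ h4]
  obtain ⟨hIntegrable, hmain⟩ := main_energy hf hu hst hη hq hg hzero
  have hS3 : ∀ x, (1 + ‖gradient u x‖ ^ 2) ^ ((3:ℝ)/2)
      = (Real.sqrt (1 + ‖gradient u x‖ ^ 2)) ^ 3 := by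
    intro x
    have h0 : (0:ℝ) ≤ 1 + ‖gradient u x‖ ^ 2 := by positivity
    generalize 1 + ‖gradient u x‖ ^ 2 = s at h0
    rw [Real.sqrt_eq_rpow, ← Real.rpow_natCast, ← Real.rpow_mul h0]
    norm_num
  simp only [hS3]
  have hS0 : ∀ x, 0 < Real.sqrt (1 + ‖gradient u x‖ ^ 2) := fun x => by positivity
  have hSsq : ∀ x, Real.sqrt (1 + ‖gradient u x‖ ^ 2) ^ 2 = 1 + ‖gradient u x‖ ^ 2 := fun x =>
    Real.sq_sqrt (by positivity)
  have hS1 : ∀ x, 1 ≤ Real.sqrt (1 + ‖gradient u x‖ ^ 2) := fun x => by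
    rw [Real.one_le_sqrt]; nlinarith [sq_nonneg ‖gradient u x‖]
  have hρ2 : ρ ^ (2 * a) = (ρ ^ 2) ^ a := by
    rw [Real.rpow_mul hρ.le]; norm_num
  have hR2 : R ^ (2 * a) = (R ^ 2) ^ a := by
    rw [Real.rpow_mul hR.le]; norm_num
  have hwz : ∀ x, ⟪gradient u x, x⟫ ^ 2 ≤ ‖x‖ ^ 2 * ‖gradient u x‖ ^ 2 := by
    intro x
    rw [← sq_abs, ← mul_pow]
    have := abs_real_inner_le_norm (gradient u x) x
    rw [mul_comm] at this
    gcongr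
  have hηsq : ∀ x : Euc n, ‖x‖ < R → η x ^ 2 = (ρ ^ 2 + ‖x‖ ^ 2) ^ (-a) := by
    intro x hx
    have h1 : ‖x‖ ^ 2 / R ^ 2 ≤ 1 := by
      rw [div_le_one (by positivity)]; gcongr
    simp only [η, (hθ1 _ h1).1, mul_one]
    rw [← Real.rpow_natCast, ← Real.rpow_mul (hpos x).le]
    norm_num
  have hinner : ∀ x : Euc n, ‖x‖ < R → mainI u η q x
      ≤ - ((1 - ‖x‖ ^ 2 / (ρ ^ 2 + ‖x‖ ^ 2)) * η x ^ 2 * (‖gradient u x‖ ^ 2) ^ 2)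
        / Real.sqrt (1 + ‖gradient u x‖ ^ 2) ^ 3 := by
    intro x hx
    have h1 : ‖x‖ ^ 2 / R ^ 2 ≤ 1 := by
      rw [div_le_one (by positivity)]; gcongr
    unfold mainI
    refine div_le_div_of_nonneg_right ?_ (pow_pos (hS0 x) 3).le
    have hp := hpos x
    refine alg_inner hn (s := ⟪gradient u x, x⟫ ^ 2 / ‖x‖ ^ 2) (by positivity) ?_ ?_ (by positivity)
      ?_ ?_
    · exact div_le_of_le_mul₀ (by positivity) (by positivity) (by rw [mul_comm]; exact hwz x)
    · by_cases h0 : x = 0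
      · simp [h0]
      · have : ‖x‖ ≠ 0 := norm_ne_zero_iff.2 h0
        field_simp
    · rw [div_le_one hp]; nlinarith
    · simp only [η, q, hθ1 _ h1, mul_one, mul_zero, add_zero, ← ha]
      rw [Real.rpow_sub hp, Real.rpow_one]
      field_simp
  have houter : ∀ x : Euc n, R ≤ ‖x‖ → ‖x‖ ≤ 2 * R → mainI u η q x
      ≤ (M ^ 2 + 6 * M) * (1 / R ^ (2 * a)) * ‖gradient u x‖ ^ 2 := by
    intro x hx1 hx2
    have hp := hpos x
    have hRx : R ^ 2 ≤ ρ ^ 2 + ‖x‖ ^ 2 := by nlinarith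
    have hA2 : ((R ^ 2) ^ (-a / 2)) ^ 2 = 1 / R ^ (2 * a) := by
      rw [hR2, ← Real.rpow_natCast, ← Real.rpow_mul (by positivity), one_div,
        ← Real.rpow_neg (by positivity)]
      norm_num
    have hle : (ρ ^ 2 + ‖x‖ ^ 2) ^ (-a / 2) ≤ (R ^ 2) ^ (-a / 2) :=
      Real.rpow_le_rpow_of_nonpos (by positivity) hRx (by linarith)
    have hB0 : 0 ≤ (ρ ^ 2 + ‖x‖ ^ 2) ^ (-a / 2) := by positivity
    have hA0 : 0 ≤ (R ^ 2) ^ (-a / 2) := by positivity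
    set A := (R ^ 2) ^ (-a / 2) with hAdef
    obtain ⟨hθ0, hθl⟩ := h01 (‖x‖ ^ 2 / R ^ 2)
    have hKx := hK (‖x‖ ^ 2 / R ^ 2)
    have hqA : |q x| ≤ a * A / R ^ 2 + A * (2 / R ^ 2 * K) := by
      simp only [q]
      refine (abs_add_le _ _).trans (add_le_add ?_ ?_)
      · rw [Real.rpow_sub hp, Real.rpow_one, abs_mul, abs_mul, abs_neg, abs_of_nonneg ha0,
          abs_of_nonneg hθ0, abs_of_nonneg (by positivity), mul_div_assoc]
        calc a * ((ρ ^ 2 + ‖x‖ ^ 2) ^ (-a / 2) / (ρ ^ 2 + ‖x‖ ^ 2)) * θ (‖x‖ ^ 2 / R ^ 2)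
            ≤ a * (A / R ^ 2) * 1 := by gcongr
          _ = _ := by ring
      · rw [abs_mul, abs_mul, abs_of_nonneg hB0, abs_of_nonneg (by positivity : 0 ≤ 2 / R ^ 2)]
        gcongr
    have hqt : |q x| * ‖x‖ ^ 2 ≤ M * A := by
      calc |q x| * ‖x‖ ^ 2 ≤ (a * A / R ^ 2 + A * (2 / R ^ 2 * K)) * (2 * R) ^ 2 := by gcongr
        _ = M * A := by rw [hMdef]; field_simp; ring
    have hη0 : 0 ≤ η x := mul_nonneg hB0 hθ0
    have hηA : η x ≤ A := by
      calc η x ≤ A * 1 := by simp only [η]; gcongr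
        _ = A := mul_one A
    have hS := hSsq x
    unfold mainI
    rw [div_le_iff₀ (pow_pos (hS0 x) 3), ← hA2]
    refine (alg_outer hn (by positivity) (by positivity) hA0 (hwz x) hη0 hηA hqt).trans ?_
    have h32 : Real.sqrt (1 + ‖gradient u x‖ ^ 2) ^ 2 ≤ Real.sqrt (1 + ‖gradient u x‖ ^ 2) ^ 3 :=
      pow_le_pow_right₀ (hS1 x) (by norm_num)
    calc _ = (M ^ 2 + 6 * M) * A ^ 2 * ‖gradient u x‖ ^ 2
          * Real.sqrt (1 + ‖gradient u x‖ ^ 2) ^ 2 := by rw [hS]; ring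
      _ ≤ _ := mul_le_mul_of_nonneg_left h32 (by positivity)
  set X : Euc n → ℝ := fun x =>
    (‖gradient u x‖ ^ 2) ^ 2 / Real.sqrt (1 + ‖gradient u x‖ ^ 2) ^ 3 with hX
  have hXc : Continuous X :=
    Continuous.div (by fun_prop) (by fun_prop) fun x => (pow_pos (hS0 x) 3).ne'
  have hX0 : ∀ x, 0 ≤ X x := fun x => by positivity
  set c : ℝ := 1 / (2 * 2 ^ a * ρ ^ (2 * a)) with hc
  set D : ℝ := (M ^ 2 + 6 * M + 1) * (1 / R ^ (2 * a)) with hD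
  have hD0 : 0 ≤ D := by positivity
  have hbound : ∀ x, mainI u η q x ≤ - (c * (ball (0 : Euc n) ρ).indicator X x)
      + D * (ball (0 : Euc n) (2*R) \ ball (0 : Euc n) R).indicator
        (fun x => ‖gradient u x‖ ^ 2) x := by
    intro x
    rcases lt_or_ge ‖x‖ R with hxR | hxR
    · have hnot : x ∉ ball (0 : Euc n) (2*R) \ ball (0 : Euc n) R := by
        simp [hxR]
      rw [Set.indicator_of_notMem hnot, mul_zero, add_zero]
      refine (hinner x hxR).trans ?_
      have hp := hpos x
      have hl : ‖x‖ ^ 2 / (ρ ^ 2 + ‖x‖ ^ 2) ≤ 1 := by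
        rw [div_le_one hp]; nlinarith
      rcases lt_or_ge ‖x‖ ρ with hxρ | hxρ
      · rw [Set.indicator_of_mem (by simpa using hxρ), neg_div, neg_le_neg_iff, mul_div_assoc]
        refine mul_le_mul_of_nonneg_right ?_ (hX0 x)
        have hxρ2 : ‖x‖ ^ 2 ≤ ρ ^ 2 := by gcongr
        have hl2 : 1 / 2 ≤ 1 - ‖x‖ ^ 2 / (ρ ^ 2 + ‖x‖ ^ 2) := by
          have : ‖x‖ ^ 2 / (ρ ^ 2 + ‖x‖ ^ 2) ≤ 1 / 2 := by
            rw [div_le_iff₀ hp]; linarith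
          linarith
        have hη2 : (2 * ρ ^ 2) ^ (-a) ≤ η x ^ 2 := by
          rw [hηsq x hxR]
          exact Real.rpow_le_rpow_of_nonpos hp (by linarith) (by linarith)
        have hcc : c = 1 / 2 * (2 * ρ ^ 2) ^ (-a) := by
          rw [hc, hρ2, Real.rpow_neg (by positivity), Real.mul_rpow (by norm_num) (by positivity)]
          field_simp
        rw [hcc]
        gcongr
      · rw [Set.indicator_of_notMem (by simpa using hxρ), neg_div]
        simp only [mul_zero, neg_zero, Left.neg_nonpos_iff]
        have : 0 ≤ 1 - ‖x‖ ^ 2 / (ρ ^ 2 + ‖x‖ ^ 2) := by linarith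
        positivity
    · have hnotρ : x ∉ ball (0 : Euc n) ρ := by
        simp; linarith
      rw [Set.indicator_of_notMem hnotρ, mul_zero, neg_zero, zero_add]
      rcases lt_or_ge ‖x‖ (2 * R) with hx2 | hx2
      · have hmem : x ∈ ball (0 : Euc n) (2*R) \ ball (0 : Euc n) R := by
          simp [hx2, hxR]
        rw [Set.indicator_of_mem hmem]
        refine (houter x hxR hx2.le).trans ?_
        rw [hD]
        have hle : M ^ 2 + 6 * M ≤ M ^ 2 + 6 * M + 1 := by linarith
        exact mul_le_mul_of_nonneg_right
          (mul_le_mul_of_nonneg_right hle (by positivity)) (by positivity)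
      · have : mainI u η q x = 0 := by simp [mainI, hzero x hx2]
        rw [this]
        exact mul_nonneg hD0 (Set.indicator_nonneg (fun _ _ => by positivity) _)
  have hi1 : Integrable ((ball (0 : Euc n) ρ).indicator X) := by
    rw [integrable_indicator_iff measurableSet_ball]
    exact (hXc.continuousOn.integrableOn_compact (isCompact_closedBall (0 : Euc n) ρ)).mono_set
      ball_subset_closedBall
  have hms : MeasurableSet (ball (0 : Euc n) (2*R) \ ball (0 : Euc n) R) :=
    measurableSet_ball.diff measurableSet_ball
  have hi2 : Integrable ((ball (0 : Euc n) (2*R) \ ball (0 : Euc n) R).indicator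
      (fun x => ‖gradient u x‖ ^ 2)) := by
    rw [integrable_indicator_iff hms]
    have hc' : Continuous fun x => ‖gradient u x‖ ^ 2 := by fun_prop
    exact (hc'.continuousOn.integrableOn_compact (isCompact_closedBall (0 : Euc n) (2*R))).mono_set
      (Set.sdiff_subset.trans ball_subset_closedBall)
  have hfin := hmain.trans (integral_mono hIntegrable ((hi1.const_mul c).neg.add (hi2.const_mul D)) hbound)
  have hsplit : ∫ x, ((- fun x => c * (ball (0 : Euc n) ρ).indicator X x)
      + fun x => D * (ball (0 : Euc n) (2*R) \ ball (0 : Euc n) R).indicator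
        (fun x => ‖gradient u x‖ ^ 2) x) x
      = - (c * ∫ x in ball (0 : Euc n) ρ, X x)
        + D * ∫ x in ball (0 : Euc n) (2*R) \ ball (0 : Euc n) R, ‖gradient u x‖ ^ 2 := by
    rw [integral_add' (hi1.const_mul c).neg (hi2.const_mul D), integral_neg', integral_const_mul,
      integral_const_mul, integral_indicator measurableSet_ball, integral_indicator hms]
  have hfin2 : 0 ≤ - (c * ∫ x in ball (0 : Euc n) ρ, X x)
        + D * ∫ x in ball (0 : Euc n) (2*R) \ ball (0 : Euc n) R, ‖gradient u x‖ ^ 2 :=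
    hsplit ▸ hfin
  have h2a : (0:ℝ) < 2 * 2 ^ a := by positivity
  have hρa : 0 < ρ ^ (2 * a) := by positivity
  have e1 : 1 / ρ ^ (2 * a) = 2 * 2 ^ a * c := by rw [hc]; field_simp
  have e2 : 2 * 2 ^ a * (M ^ 2 + 6 * M + 1) / R ^ (2 * a) = 2 * 2 ^ a * D := by rw [hD]; ring
  rw [e1, e2, mul_assoc (2 * 2 ^ a) c, mul_assoc (2 * 2 ^ a) D]
  refine mul_le_mul_of_nonneg_left ?_ h2a.le
  linarith

end helpers

/-- **Key global estimate in the proof of the Liouville theorem.**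
Let `n ≥ 2` and set `a = (n-2)/2` if `2 ≤ n ≤ 10` and `a = √(n-1)+1` if `n ≥ 11`.
If `u` is a `W^{3,1}_loc(ℝⁿ)` stable solution of `div(∇u/√(1+|∇u|²)) = -f(u)` in `ℝⁿ`
(`f ∈ C¹(ℝ)`) and `z = |∇u|²`, then there is a dimensional constant `C > 0` such that
`(1/ρ^{2a}) ∫_{B_ρ} z²/(1+z)^{3/2} ≤ (C/R^{2a}) ∫_{B_{2R}∖B_R} z` for all `0 < ρ < R`. -/
theorem stmt_18 (n : ℕ) (hn : 2 ≤ n) :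
    ∃ C > (0:ℝ), ∀ (f : ℝ → ℝ) (u : Euc n → ℝ),
      ContDiff ℝ 1 f →
      ContDiff ℝ 3 u →
      IsStableSolution (Set.univ : Set (Euc n)) f u →
      ∀ ρ R : ℝ, 0 < ρ → ρ < R →
        1 / ρ ^ (2 * (if n ≤ 10 then ((n:ℝ) - 2)/2 else Real.sqrt ((n:ℝ) - 1) + 1)) *
            ∫ x in ball (0 : Euc n) ρ,
              (‖gradient u x‖ ^ 2) ^ 2 / (1 + ‖gradient u x‖ ^ 2) ^ ((3:ℝ)/2)
          ≤ C / R ^ (2 * (if n ≤ 10 then ((n:ℝ) - 2)/2 else Real.sqrt ((n:ℝ) - 1) + 1)) *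
            ∫ x in ball (0 : Euc n) (2*R) \ ball (0 : Euc n) R, ‖gradient u x‖ ^ 2 := by
  exact main_final hn
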